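/- Let G be a finite pseudo-solvable group and let p be a prime with p ∉ {2,3,5} such that p, 3, and 5 all divide |G| and G has no element of order 3p, no element of order 5p, and no element of order 15 (so {p,3,5} forms a triangle in the complement of the prime graph of G). Then G has an element of order 6 and an element of order 10 (so neither 2–3 nor 2–5 is an edge of the complement of the prime graph). -/

import Mathlib

/-- A finite group is *pseudo-solvable* if it has a subnormal series whose factors are
all cyclic or isomorphic to the alternating group `A₅`. -/
def IsPseudoSolvable (G : Type*) [Group G] : Prop :=
  ∃ (n : ℕ) (H : Fin (n + 1) → Subgroup G),
    H 0 = ⊥ ∧ H (Fin.last n) = ⊤ ∧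
    ∀ i : Fin n, H i.castSucc ≤ H i.succ ∧
      ∃ hN : ((H i.castSucc).subgroupOf (H i.succ)).Normal,
        haveI := hN
        IsCyclic (H i.succ ⧸ (H i.castSucc).subgroupOf (H i.succ)) ∨
        Nonempty ((H i.succ ⧸ (H i.castSucc).subgroupOf (H i.succ)) ≃* alternatingGroup (Fin 5))

/-!
Argue by induction on `|G|`, supposing that `G` lacks elements of order `6` or of order `10`, and
let `T` be a set of at least three odd primes dividing `|G|` no two of which multiply to an element
order. Then `G` has a nontrivial characteristic subgroup `M` which is an `r`-group or a copy of
`A₅`: two distinct normal copies of `A₅` would commute and so produce orders `6` and `10`. If all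
primes of `T` divide `|G / M|`, the quotient is smaller; otherwise some `r ∈ T` divides only `|M|`.

* If `M ≃ A₅`, then `r` is `3` or `5`, and some `p ∈ T` does not divide `60`. An element of order
  `p` permutes the `20` elements of order `3` of `M`, or the `24` elements of order `5`, and fixes
  one of them, so `r * p` is an element order.
* If `M` is an `r`-group, then `K = G / C_G(Z(M))` is an `r'`-group acting faithfully on `Z(M)`,
  and the elements of order `s ∈ T \ {r}` act without nontrivial fixed points. By the Frattini
  argument and the fixed point property of Frobenius groups, if `N` is normal in `K`, `s` does not
  divide `|N|` and a prime `t` does, then `s * t` is an element order of `K`. Hence a subnormal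
  series of `K` can be descended, keeping all of `T \ {r}` in the order, until the kernel `N` of
  a map onto a factor is prime to `T \ {r}`. That factor must be `A₅` and `T \ {r} = {3, 5}`. The
  four-group of `A₄` gives order `6`; since `A₅` has no such element, `2` divides `|N|`, and this
  in turn gives order `10`.
-/

universe u v

section ElementOrders

/-- The set `ω(G)` of orders of elements of `G`. Distinct primes `p` and `q` dividing `|G|` are
adjacent in the prime graph of `G` exactly when `p * q ∈ elementOrders G`. -/
def elementOrders (G : Type*) [Group G] : Set ℕ :=
  Set.range (orderOf : G → ℕ)

variable {G H : Type*} [Group G] [Group H]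

theorem mem_elementOrders_of_dvd_orderOf [Finite G] {x : G} {n : ℕ} (h : n ∣ orderOf x) :
    n ∈ elementOrders G :=
  ⟨_, orderOf_pow_orderOf_div (orderOf_pos x).ne' h⟩

theorem elementOrders_subset_of_injective {f : H →* G} (hf : Function.Injective f) :
    elementOrders H ⊆ elementOrders G := by
  rintro _ ⟨h, rfl⟩
  exact ⟨f h, orderOf_injective f hf h⟩

theorem elementOrders_subgroup_subset (S : Subgroup G) : elementOrders S ⊆ elementOrders G :=
  elementOrders_subset_of_injective S.subtype_injective

theorem elementOrders_subset_of_surjective [Finite G] {f : G →* H} (hf : Function.Surjective f) :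
    elementOrders H ⊆ elementOrders G := by
  rintro _ ⟨h, rfl⟩
  obtain ⟨g, rfl⟩ := hf h
  exact mem_elementOrders_of_dvd_orderOf (orderOf_map_dvd f g)

theorem mem_elementOrders_of_prime_dvd_card [Finite G] {p : ℕ} (hp : p.Prime)
    (h : p ∣ Nat.card G) : p ∈ elementOrders G :=
  haveI : Fact p.Prime := ⟨hp⟩
  exists_prime_orderOf_dvd_card' p h

theorem mul_mem_elementOrders_of_commute [Finite G] {s t : ℕ} (hs : s.Prime) (ht : t.Prime)
    (hst : s ≠ t) {x y : G} (hxy : Commute x y) (hx : s ∣ orderOf x) (hy : t ∣ orderOf y) :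
    s * t ∈ elementOrders G := by
  have hx' := orderOf_pow_orderOf_div (orderOf_pos x).ne' hx
  have hy' := orderOf_pow_orderOf_div (orderOf_pos y).ne' hy
  refine ⟨x ^ (orderOf x / s) * y ^ (orderOf y / t), ?_⟩
  rw [(hxy.pow_pow _ _).orderOf_mul_eq_mul_orderOf_of_coprime, hx', hy']
  rw [hx', hy']
  exact (Nat.coprime_primes hs ht).2 hst

theorem orderOf_map_of_not_dvd_card_ker (f : G →* H) {x : G} {p : ℕ} (hp : p.Prime)
    (hx : orderOf x = p) (hker : ¬ p ∣ Nat.card f.ker) : orderOf (f x) = p := by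
  refine ((Nat.dvd_prime hp).1 (hx ▸ orderOf_map_dvd f x)).resolve_left fun h => hker ?_
  rw [← hx]
  exact Subgroup.orderOf_dvd_natCard _ (orderOf_eq_one_iff.1 h)

theorem dvd_card_ker_of_mul_mem_elementOrders [Finite G] [Finite H] (f : G →* H) {s t : ℕ}
    (hs : s.Prime) (ht : t.Prime) (hst : s ≠ t) (hG : s * t ∈ elementOrders G)
    (hH : s * t ∉ elementOrders H) (hker : ¬ s ∣ Nat.card f.ker) : t ∣ Nat.card f.ker := by
  by_contra hker'
  obtain ⟨g, hg⟩ := hG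
  have hs' : s ∣ orderOf (f g) := by
    rw [← orderOf_map_of_not_dvd_card_ker f hs
      (orderOf_pow_orderOf_div (orderOf_pos g).ne' (hg ▸ dvd_mul_right s t)) hker, map_pow]
    exact orderOf_pow_dvd _
  have ht' : t ∣ orderOf (f g) := by
    rw [← orderOf_map_of_not_dvd_card_ker f ht
      (orderOf_pow_orderOf_div (orderOf_pos g).ne' (hg ▸ dvd_mul_left t s)) hker', map_pow]
    exact orderOf_pow_dvd _
  exact hH (mul_mem_elementOrders_of_commute hs ht hst (Commute.refl (f g)) hs' ht')

theorem mul_mem_elementOrders_of_not_dvd_card [Finite G] (A : Subgroup G) [A.Normal] {p q : ℕ}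
    (hp : p.Prime) (hq : q.Prime) (hqp : q ≠ p) (hpG : p ∣ Nat.card G)
    (hA : ¬ p ∣ Nat.card {a : A // orderOf a = q}) : q * p ∈ elementOrders G := by
  have : Fact p.Prime := ⟨hp⟩
  have := Fintype.ofFinite {a : A // orderOf a = q}
  obtain ⟨x, hx⟩ := exists_prime_orderOf_dvd_card' p hpG
  let σ : Equiv.Perm {a : A // orderOf a = q} :=
    (MulAut.toPerm A (MulAut.conjNormal x)).subtypePerm fun a =>
      ((MulAut.conjNormal x : MulAut A).orderOf_eq a).congr_left
  have hpow : MulAut.toPerm A (MulAut.conjNormal x) ^ p = 1 := by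
    rw [← map_pow, ← map_pow, ← hx, pow_orderOf_eq_one, map_one, map_one]
  have hσ : σ ^ p ^ 1 = 1 := by
    rw [pow_one]
    exact (Equiv.Perm.subtypePerm_pow _ _ _).trans
      (Equiv.ext fun a => Subtype.ext (DFunLike.congr_fun hpow a.1))
  rw [Nat.card_eq_fintype_card] at hA
  obtain ⟨a, ha⟩ := Equiv.Perm.exists_fixed_point_of_prime hA hσ
  have hconj : x * (a.1 : G) * x⁻¹ = a.1 := by
    rw [← MulAut.conjNormal_apply]
    exact congrArg (fun b => ((b.1 : A) : G)) ha
  refine mul_mem_elementOrders_of_commute hq hp hqp (x := (a.1 : G)) (y := x) ?_ ?_ hx.symm.dvd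
  · exact (mul_inv_eq_iff_eq_mul.1 hconj).symm
  · rw [Subgroup.orderOf_coe, a.2]

theorem mul_mem_elementOrders_of_normal_isSimpleGroup [Finite G] (A : Subgroup G) [A.Normal]
    [IsSimpleGroup A] (hA : ¬ A.Characteristic) {s t : ℕ} (hs : s.Prime) (ht : t.Prime)
    (hst : s ≠ t) (hsA : s ∣ Nat.card A) (htA : t ∣ Nat.card A) : s * t ∈ elementOrders G := by
  simp only [Subgroup.characteristic_iff_le_map, not_forall] at hA
  obtain ⟨ϕ, hϕ⟩ := hA
  have hnormal : (A.map ϕ.toMonoidHom).Normal := Subgroup.Normal.map ‹_› _ ϕ.surjective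
  have hdisj : Disjoint A (A.map ϕ.toMonoidHom) := by
    rcases (inferInstance : ((A.map ϕ.toMonoidHom).subgroupOf A).Normal).eq_bot_or_eq_top
      with h | h
    · exact (Subgroup.subgroupOf_eq_bot.1 h).symm
    · exact absurd (Subgroup.subgroupOf_eq_top.1 h) hϕ
  obtain ⟨a, ha⟩ := mem_elementOrders_of_prime_dvd_card hs hsA
  obtain ⟨b, hb⟩ := mem_elementOrders_of_prime_dvd_card ht htA
  refine mul_mem_elementOrders_of_commute hs ht hst
    (Subgroup.commute_of_normal_of_disjoint _ _ ‹_› hnormal hdisj _ _ a.2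
      (Subgroup.mem_map_of_mem ϕ.toMonoidHom b.2)) ?_ ?_
  · rw [Subgroup.orderOf_coe, ha]
  · rw [MulEquiv.toMonoidHom_eq_coe, MonoidHom.coe_coe, MulEquiv.orderOf_eq, Subgroup.orderOf_coe,
      hb]

end ElementOrders

section OddCocliques

/-- `T` is an independent set of odd vertices of the prime graph of `G`, i.e. a clique of odd
vertices of its complement. -/
structure IsOddCoclique (G : Type*) [Group G] (T : Finset ℕ) : Prop where
  prime : ∀ p ∈ T, p.Prime
  ne_two : ∀ p ∈ T, p ≠ 2
  dvd_card : ∀ p ∈ T, p ∣ Nat.card G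
  mul_notMem : ∀ p ∈ T, ∀ q ∈ T, p ≠ q → p * q ∉ elementOrders G

variable {G H : Type*} [Group G] [Group H] {S T : Finset ℕ}

theorem IsOddCoclique.mono (hT : IsOddCoclique G T) (hST : S ⊆ T)
    (hdvd : ∀ p ∈ S, p ∣ Nat.card H) (hHG : elementOrders H ⊆ elementOrders G) :
    IsOddCoclique H S where
  prime p hp := hT.prime p (hST hp)
  ne_two p hp := hT.ne_two p (hST hp)
  dvd_card := hdvd
  mul_notMem p hp q hq hpq h := hT.mul_notMem p (hST hp) q (hST hq) hpq (hHG h)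

theorem IsOddCoclique.insert_three_five {p : ℕ} (hp : p.Prime) (hp2 : p ≠ 2)
    (hpd : p ∣ Nat.card G) (h3d : 3 ∣ Nat.card G) (h5d : 5 ∣ Nat.card G)
    (h3p : 3 * p ∉ elementOrders G) (h5p : 5 * p ∉ elementOrders G) (h15 : 15 ∉ elementOrders G) :
    IsOddCoclique G {p, 3, 5} where
  prime := by simp [hp, Nat.prime_three, Nat.prime_five]
  ne_two := by simp [hp2]
  dvd_card := by simp [hpd, h3d, h5d]
  mul_notMem := by
    simp only [Finset.mem_insert, Finset.mem_singleton]
    grind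

theorem IsOddCoclique.nontrivial (hT : IsOddCoclique G T) (hcard : 0 < T.card) :
    Nontrivial G := by
  obtain ⟨p, hp⟩ := Finset.card_pos.1 hcard
  by_contra hG
  rw [not_nontrivial_iff_subsingleton] at hG
  have hdvd := hT.dvd_card p hp
  rw [Nat.card_of_subsingleton (1 : G), Nat.dvd_one] at hdvd
  exact (hT.prime p hp).ne_one hdvd

theorem IsOddCoclique.dvd_card_or_dvd_index (hT : IsOddCoclique G T) (N : Subgroup G) {p : ℕ}
    (hp : p ∈ T) : p ∣ Nat.card N ∨ p ∣ N.index :=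
  (hT.prime p hp).dvd_mul.1 (N.card_mul_index ▸ hT.dvd_card p hp)

theorem IsOddCoclique.card_le_one_of_isCyclic [Finite G] [IsCyclic G] (hT : IsOddCoclique G T) :
    T.card ≤ 1 := by
  refine Finset.card_le_one.2 fun s hs t ht => by_contra fun hst => hT.mul_notMem s hs t ht hst ?_
  obtain ⟨g, hg⟩ := IsCyclic.exists_ofOrder_eq_natCard (α := G)
  exact mul_mem_elementOrders_of_commute (hT.prime s hs) (hT.prime t ht) hst (Commute.refl g)
    (hg ▸ hT.dvd_card s hs) (hg ▸ hT.dvd_card t ht)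

end OddCocliques

section Alternating

open alternatingGroup

theorem exists_injective_alternatingGroup_monoidHom {α β : Type*} [Fintype α] [DecidableEq α]
    [Fintype β] [DecidableEq β] {p : β → Prop} (e : α ≃ Subtype p) :
    ∃ φ : alternatingGroup α →* alternatingGroup β, Function.Injective φ := by
  classical
  let φ : alternatingGroup α →* Equiv.Perm β :=
    (Equiv.Perm.extendDomainHom e).comp (alternatingGroup α).subtype
  have hφ : ∀ a, φ a ∈ alternatingGroup β := fun a => by
    rw [Equiv.Perm.mem_alternatingGroup, ← Equiv.Perm.mem_alternatingGroup.1 a.2]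
    exact Equiv.Perm.sign_extendDomain a.1 e
  refine ⟨φ.codRestrict _ hφ, (MonoidHom.injective_codRestrict _ _ _).2 ?_⟩
  exact (Equiv.Perm.extendDomainHom_injective e).comp (alternatingGroup α).subtype_injective

theorem card_alternatingGroup_five : Nat.card (alternatingGroup (Fin 5)) = 60 := by
  rw [nat_card_alternatingGroup, Nat.card_fin]
  rfl

theorem eq_three_or_eq_five_of_dvd_sixty {p : ℕ} (hp : p.Prime) (hp2 : p ≠ 2) (h : p ∣ 60) :
    p = 3 ∨ p = 5 := by
  rw [show 60 = 2 ^ 2 * (3 * 5) by norm_num, hp.dvd_mul, hp.dvd_mul] at h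
  rcases h with h | h | h
  · exact absurd ((Nat.prime_dvd_prime_iff_eq hp Nat.prime_two).1 (hp.dvd_of_dvd_pow h)) hp2
  · exact .inl ((Nat.prime_dvd_prime_iff_eq hp Nat.prime_three).1 h)
  · exact .inr ((Nat.prime_dvd_prime_iff_eq hp Nat.prime_five).1 h)

theorem card_orderOf_eq_three_alternatingGroup_five :
    Nat.card {a : alternatingGroup (Fin 5) // orderOf a = 3} = 20 := by
  have : Fact (Nat.Prime 3) := ⟨Nat.prime_three⟩
  simp only [orderOf_eq_prime_iff, Nat.card_eq_fintype_card, Fintype.card_subtype]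
  decide +kernel

theorem card_orderOf_eq_five_alternatingGroup_five :
    Nat.card {a : alternatingGroup (Fin 5) // orderOf a = 5} = 24 := by
  have : Fact (Nat.Prime 5) := ⟨Nat.prime_five⟩
  simp only [orderOf_eq_prime_iff, Nat.card_eq_fintype_card, Fintype.card_subtype]
  decide +kernel

theorem six_notMem_elementOrders_alternatingGroup_five :
    6 ∉ elementOrders (alternatingGroup (Fin 5)) := by
  have hsmall : ∀ g : alternatingGroup (Fin 5), g ^ 6 = 1 → g ^ 2 = 1 ∨ g ^ 3 = 1 := by
    decide +kernel
  rintro ⟨g, hg⟩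
  rcases hsmall g (hg ▸ pow_orderOf_eq_one g) with h | h <;>
    have := orderOf_dvd_of_pow_eq_one h <;> simp [hg] at this

end Alternating

section FrobeniusGroups

variable {K M : Type*} [Group K]

theorem prod_range_pow_smul_eq_one [CommMonoid M] [MulDistribMulAction K M] {x : K} {n : ℕ}
    (hx : x ^ n = 1) (hfree : ∀ m : M, x • m = m → m = 1) (m : M) :
    ∏ i ∈ Finset.range n, x ^ i • m = 1 := by
  refine hfree _ ?_
  simp only [Finset.smul_prod', smul_smul, ← pow_succ']
  rcases n with _ | n
  · rfl
  · rw [Finset.prod_range_succ, hx, Finset.prod_range_succ' (fun i => x ^ i • m), pow_zero]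

theorem prod_conj_smul_eq_prod_smul [CommMonoid M] [MulDistribMulAction K M] (Q : Subgroup K)
    [Fintype Q] {g : K} (hg : g ∈ Subgroup.normalizer (Q : Set K))
    (hcomm : ∀ y ∈ Q, Commute g y → y = 1) (m : M) :
    ∏ y : Q, ((y : K) * g * (y : K)⁻¹) • m = ∏ z : Q, (z : K) • g • m := by
  let φ : Q → Q := fun y => ⟨y * (g * (y : K)⁻¹ * g⁻¹),
    Q.mul_mem y.2 ((Subgroup.mem_normalizer_iff.1 hg _).1 (Q.inv_mem y.2))⟩
  have hφ : Function.Injective φ := fun y z hyz => by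
    have hyz' : (y : K) * g * (y : K)⁻¹ = z * g * (z : K)⁻¹ := by
      simpa [φ, mul_assoc] using congrArg (fun w : Q => (w : K) * g) hyz
    have hzy : Commute g ((z : K)⁻¹ * y) := by
      rw [commute_iff_eq]
      calc g * ((z : K)⁻¹ * y) = (z : K)⁻¹ * (z * g * (z : K)⁻¹) * y := by group
        _ = (z : K)⁻¹ * y * g := by rw [← hyz']; group
    exact (Subtype.ext (inv_mul_eq_one.1
      (hcomm _ (Q.mul_mem (Q.inv_mem z.2) y.2) hzy))).symm
  refine Fintype.prod_bijective φ (Finite.injective_iff_bijective.1 hφ) _ _ fun y => ?_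
  rw [smul_smul]
  congr 1
  simp [φ, mul_assoc]

theorem commute_of_commute_pow {x y : K} {i q : ℕ} (hq : q.Prime) (hx : orderOf x = q)
    (hi : 0 < i) (hiq : i < q) (h : Commute (x ^ i) y) : Commute x y := by
  have hcop : i.Coprime (orderOf x) :=
    hx ▸ (Nat.coprime_of_lt_prime hi.ne' hiq hq).symm
  obtain ⟨j, hj⟩ := exists_pow_eq_self_of_coprime hcop
  exact hj ▸ h.pow_left j

/-- The product of `g • m` over all `g ∈ Q⟨x⟩` is computed twice: with `Q⟨x⟩` as the union of the
cosets `Q xⁱ`, and as the union of `Q` and of the conjugates of `⟨x⟩`. -/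
theorem pow_card_eq_prod_smul [CommGroup M] [MulDistribMulAction K M] {x : K} {q : ℕ}
    (hq : q.Prime) (hx : orderOf x = q) (hfree : ∀ m : M, x • m = m → m = 1)
    (Q : Subgroup K) [Fintype Q] (hxQ : x ∈ Subgroup.normalizer (Q : Set K))
    (hcomm : ∀ y ∈ Q, Commute x y → y = 1) (m : M) :
    m ^ Nat.card Q = ∏ z : Q, (z : K) • m := by
  have hprod (m : M) : ∏ i ∈ Finset.range q, x ^ i • m = 1 :=
    prod_range_pow_smul_eq_one (hx ▸ pow_orderOf_eq_one x) hfree m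
  have hconj : ∏ i ∈ Finset.range q, ∏ y : Q, ((y : K) * x ^ i * (y : K)⁻¹) • m = 1 := by
    rw [Finset.prod_comm]
    refine Finset.prod_eq_one fun y _ => ?_
    simp only [← smul_smul, ← Finset.smul_prod', hprod, smul_one]
  have hcoset : ∏ i ∈ Finset.range q, ∏ z : Q, (z : K) • x ^ i • m = 1 := by
    rw [Finset.prod_comm]
    refine Finset.prod_eq_one fun z _ => ?_
    rw [← Finset.smul_prod', hprod, smul_one]
  have heq : ∀ i ∈ Finset.range (q - 1), ∏ y : Q, ((y : K) * x ^ (i + 1) * (y : K)⁻¹) • m =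
      ∏ z : Q, (z : K) • x ^ (i + 1) • m := fun i hi =>
    prod_conj_smul_eq_prod_smul Q (pow_mem hxQ _) (fun y hy hxy => hcomm y hy
      (commute_of_commute_pow hq hx i.succ_pos (Nat.add_lt_of_lt_sub (Finset.mem_range.1 hi))
        hxy)) m
  rw [← Nat.sub_add_cancel hq.one_le, Finset.prod_range_succ'] at hconj hcoset
  rw [Finset.prod_congr rfl heq] at hconj
  simpa [Nat.card_eq_fintype_card] using mul_left_cancel (hconj.trans hcoset.symm)

theorem smul_eq_self_of_commute_eq_one [CommGroup M] [MulDistribMulAction K M] [Finite K]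
    {x : K} {q : ℕ} (hq : q.Prime) (hx : orderOf x = q) (hfree : ∀ m : M, x • m = m → m = 1)
    (Q : Subgroup K) (hcop : (Nat.card M).Coprime (Nat.card Q))
    (hxQ : x ∈ Subgroup.normalizer (Q : Set K)) (hcomm : ∀ y ∈ Q, Commute x y → y = 1)
    {w : K} (hw : w ∈ Q) (m : M) : w • m = m := by
  have := Fintype.ofFinite Q
  have hpow := pow_card_eq_prod_smul hq hx hfree Q hxQ hcomm
  refine hcop.pow_left_bijective.1 ?_
  change (w • m) ^ Nat.card Q = m ^ Nat.card Q
  rw [← smul_pow', hpow, Finset.smul_prod']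
  exact Fintype.prod_bijective (⟨w, hw⟩ * · : Q → Q) (Group.mulLeft_bijective _) _ _
    fun z => smul_smul w (z : K) m

end FrobeniusGroups

section CoprimeActions

theorem exists_mem_normalizer_orderOf_eq {K : Type*} [Group K] [Finite K] {N : Subgroup K}
    [N.Normal] {s t : ℕ} [Fact s.Prime] [Fact t.Prime] (P : Sylow t N) (hs : s ∣ N.index) :
    ∃ x ∈ Subgroup.normalizer ((P : Subgroup N).map N.subtype : Set K), orderOf x = s := by
  have hcard : s ∣ Nat.card (Subgroup.normalizer ((P : Subgroup N).map N.subtype : Set K)) := by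
    refine hs.trans ?_
    rw [← Subgroup.relIndex_top_right, ← Sylow.normalizer_sup_eq_top P,
      Subgroup.relIndex_sup_right]
    exact Subgroup.relIndex_dvd_card _ _
  obtain ⟨x, hx⟩ := exists_prime_orderOf_dvd_card' s hcard
  exact ⟨x, x.2, by rw [Subgroup.orderOf_coe, hx]⟩

/-- The elements of order `s` of `K` act on `M` without nontrivial fixed points. For `s` prime to
`|M|` and `K` acting by conjugation this says that `s` is adjacent to no prime divisor of `|M|` in
the prime graph of `M ⋊ K`. -/
def OrderActsFreely (K M : Type*) [Group K] [Monoid M] [MulDistribMulAction K M] (s : ℕ) : Prop :=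
  ∀ k : K, orderOf k = s → ∀ m : M, k • m = m → m = 1

variable {K M H : Type*} [Group K] [CommGroup M] [MulDistribMulAction K M] [Group H] {s t : ℕ}

theorem OrderActsFreely.subgroup (h : OrderActsFreely K M s) (S : Subgroup K) :
    OrderActsFreely S M s :=
  fun k hk => h k (by rw [Subgroup.orderOf_coe, hk])

variable [Finite K] [Finite H] [FaithfulSMul K M]

theorem mul_mem_elementOrders_of_orderActsFreely (hcop : (Nat.card M).Coprime (Nat.card K))
    (hs : s.Prime) (ht : t.Prime) (N : Subgroup K) [N.Normal] (hsN : ¬ s ∣ Nat.card N)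
    (hsK : s ∣ N.index) (htN : t ∣ Nat.card N) (hfree : OrderActsFreely K M s) :
    s * t ∈ elementOrders K := by
  have : Fact s.Prime := ⟨hs⟩
  have : Fact t.Prime := ⟨ht⟩
  have hst : s ≠ t := fun h => hsN (h ▸ htN)
  obtain ⟨P⟩ : Nonempty (Sylow t N) := inferInstance
  obtain ⟨x, hxP, hx⟩ := exists_mem_normalizer_orderOf_eq P hsK
  set Q : Subgroup K := (P : Subgroup N).map N.subtype
  have hQ : IsPGroup t Q := P.2.map _
  by_contra hno
  have hcomm : ∀ y ∈ Q, Commute x y → y = 1 := fun y hy hxy => by_contra fun hy1 => hno <|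
    mul_mem_elementOrders_of_commute hs ht hst hxy hx.symm.dvd <| by
      rw [← Subgroup.orderOf_mk y hy]
      exact hQ.dvd_orderOf (by simpa [Subtype.ext_iff] using hy1)
  have hcopQ := hcop.coprime_dvd_right (Subgroup.card_subgroup_dvd_card Q)
  have hQbot : Q = ⊥ := (Subgroup.eq_bot_iff_forall Q).2 fun w hw =>
    FaithfulSMul.eq_of_smul_eq_smul (α := M) fun m => by
      rw [one_smul, smul_eq_self_of_commute_eq_one hs hx (hfree x hx) Q hcopQ hxP hcomm hw]
  rw [Subgroup.map_eq_bot_iff_of_injective _ N.subtype_injective] at hQbot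
  exact P.ne_bot_of_dvd_card htN hQbot

theorem mul_mem_elementOrders_of_surjective_of_orderActsFreely
    (hcop : (Nat.card M).Coprime (Nat.card K)) (hs : s.Prime) (ht : t.Prime) {g : K →* H}
    (hg : Function.Surjective g) (hker : ¬ s ∣ Nat.card g.ker) (N : Subgroup H) [N.Normal]
    (hsN : ¬ s ∣ Nat.card N) (hsH : s ∣ N.index) (htN : t ∣ Nat.card N)
    (hfree : OrderActsFreely K M s) : s * t ∈ elementOrders K := by
  have hcard : Nat.card (N.comap g) = Nat.card N * Nat.card g.ker := by
    refine mul_left_cancel₀ (Subgroup.index_ne_zero_of_finite (H := N)) ?_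
    calc N.index * Nat.card (N.comap g) = Nat.card K := by
          rw [← Subgroup.index_comap_of_surjective N hg, Subgroup.index_mul_card]
      _ = Nat.card g.range * Nat.card g.ker := by
          rw [← Subgroup.index_ker, Subgroup.index_mul_card]
      _ = N.index * (Nat.card N * Nat.card g.ker) := by
          rw [MonoidHom.range_eq_top.2 hg, Subgroup.card_top, ← mul_assoc, Subgroup.index_mul_card]
  refine mul_mem_elementOrders_of_orderActsFreely hcop hs ht (N.comap g) ?_ ?_ ?_ hfree
  · rw [hcard, hs.dvd_mul]
    exact not_or.2 ⟨hsN, hker⟩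
  · rwa [Subgroup.index_comap_of_surjective N hg]
  · exact hcard ▸ htN.mul_right _

theorem card_alternatingGroup_four : Nat.card (alternatingGroup (Fin 4)) = 12 := by
  rw [nat_card_alternatingGroup, Nat.card_fin]
  rfl

theorem six_mem_elementOrders_of_surjective_alternatingGroup_four
    (hcop : (Nat.card M).Coprime (Nat.card K)) {g : K →* alternatingGroup (Fin 4)}
    (hg : Function.Surjective g) (hker : ¬ 3 ∣ Nat.card g.ker) (h3 : OrderActsFreely K M 3) :
    6 ∈ elementOrders K := by
  have := alternatingGroup.normal_kleinFour (α := Fin 4) (by simp)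
  have hV : Nat.card (alternatingGroup.kleinFour (Fin 4)) = 4 :=
    alternatingGroup.kleinFour_card_of_card_eq_four (by simp)
  have hindex : (alternatingGroup.kleinFour (Fin 4)).index = 3 := by
    have hmul := Subgroup.card_mul_index (alternatingGroup.kleinFour (Fin 4))
    rw [hV, card_alternatingGroup_four] at hmul
    lia
  exact mul_mem_elementOrders_of_surjective_of_orderActsFreely (s := 3) (t := 2) hcop
    Nat.prime_three Nat.prime_two hg hker (alternatingGroup.kleinFour (Fin 4))
    (by simp [hV]) hindex.symm.dvd (by simp [hV]) h3

theorem six_mem_elementOrders_of_surjective_alternatingGroup_five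
    (hcop : (Nat.card M).Coprime (Nat.card K)) {f : K →* alternatingGroup (Fin 5)}
    (hf : Function.Surjective f) (hker : ¬ 3 ∣ Nat.card f.ker) (h3 : OrderActsFreely K M 3) :
    6 ∈ elementOrders K := by
  obtain ⟨φ, hφ⟩ := exists_injective_alternatingGroup_monoidHom (finSuccAboveEquiv (4 : Fin 5))
  let T : Subgroup K := φ.range.comap f
  let g : T →* alternatingGroup (Fin 4) :=
    (MonoidHom.ofInjective hφ).symm.toMonoidHom.comp (f.subgroupComap φ.range)
  have hg : Function.Surjective g := (MonoidHom.ofInjective hφ).symm.surjective.comp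
    (f.subgroupComap_surjective_of_surjective φ.range hf)
  have hgf : g.ker = f.ker.comap T.subtype := by
    ext x
    exact (MonoidHom.ofInjective hφ).symm.map_eq_one_iff.trans Subtype.ext_iff
  refine elementOrders_subgroup_subset T
    (six_mem_elementOrders_of_surjective_alternatingGroup_four (M := M)
      (hcop.coprime_dvd_right (Subgroup.card_subgroup_dvd_card T)) hg
      (fun h => hker (h.trans ?_)) (h3.subgroup T))
  rw [hgf]
  exact Subgroup.card_comap_dvd_of_injective _ _ T.subtype_injective

theorem ten_mem_elementOrders_of_surjective_alternatingGroup_five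
    (hcop : (Nat.card M).Coprime (Nat.card K)) {f : K →* alternatingGroup (Fin 5)}
    (hf : Function.Surjective f) (hker : ¬ 5 ∣ Nat.card f.ker) (htwo : 2 ∣ Nat.card f.ker)
    (h5 : OrderActsFreely K M 5) : 10 ∈ elementOrders K := by
  refine mul_mem_elementOrders_of_orderActsFreely (s := 5) (t := 2) hcop Nat.prime_five
    Nat.prime_two f.ker hker ?_ htwo h5
  rw [Subgroup.index_ker, MonoidHom.range_eq_top.2 hf, Subgroup.card_top,
    card_alternatingGroup_five]
  norm_num

theorem subset_elementOrders_of_surjective_alternatingGroup_five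
    (hcop : (Nat.card M).Coprime (Nat.card K)) {f : K →* alternatingGroup (Fin 5)}
    (hf : Function.Surjective f) (hker3 : ¬ 3 ∣ Nat.card f.ker) (hker5 : ¬ 5 ∣ Nat.card f.ker)
    (h3 : OrderActsFreely K M 3) (h5 : OrderActsFreely K M 5) : {6, 10} ⊆ elementOrders K := by
  have h6 : 6 ∈ elementOrders K :=
    six_mem_elementOrders_of_surjective_alternatingGroup_five hcop hf hker3 h3
  have htwo : 2 ∣ Nat.card f.ker :=
    dvd_card_ker_of_mul_mem_elementOrders f Nat.prime_three Nat.prime_two (by norm_num) h6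
      six_notMem_elementOrders_alternatingGroup_five hker3
  exact Set.pair_subset h6
    (ten_mem_elementOrders_of_surjective_alternatingGroup_five hcop hf hker5 htwo h5)

end CoprimeActions

section Towers

/-- The groups allowed as factors of a pseudo-solvable group. -/
def IsCyclicOrA5 (Q : Type*) [Group Q] : Prop :=
  IsCyclic Q ∨ Nonempty (Q ≃* alternatingGroup (Fin 5))

theorem IsCyclicOrA5.of_surjective {Q : Type u} {R : Type v} [Group Q] [Group R]
    (hQ : IsCyclicOrA5 Q) {f : Q →* R} (hf : Function.Surjective f) : IsCyclicOrA5 R := by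
  rcases hQ with hQ | ⟨⟨e⟩⟩
  · exact .inl (isCyclic_of_surjective f hf)
  · have := alternatingGroup.isSimpleGroup (α := Fin 5) (by simp)
    have := e.isSimpleGroup
    rcases f.normal_ker.eq_bot_or_eq_top with h | h
    · exact .inr ⟨(MulEquiv.ofBijective f ⟨(MonoidHom.ker_eq_bot_iff f).1 h, hf⟩).symm.trans e⟩
    · have : Subsingleton R := subsingleton_of_forall_eq 1 fun y => by
        obtain ⟨a, rfl⟩ := hf y
        exact MonoidHom.mem_ker.1 (h ▸ Subgroup.mem_top a)
      exact .inl isCyclic_of_subsingleton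

/-- Pseudo-solvability as an inductive predicate: the trivial groups, closed under extensions by
factors that are cyclic or isomorphic to `A₅`. -/
inductive IsPolyCyclicOrA5 : ∀ (G : Type u) [Group G], Prop
  | of_subsingleton (G : Type u) [Group G] [Subsingleton G] : IsPolyCyclicOrA5 G
  | extension {G : Type u} [Group G] (N : Subgroup G) [N.Normal] (hN : IsPolyCyclicOrA5 N)
      (hQ : IsCyclicOrA5 (G ⧸ N)) : IsPolyCyclicOrA5 G

theorem IsPolyCyclicOrA5.of_surjective {G : Type u} {H : Type v} [Group G] [Group H]
    (hG : IsPolyCyclicOrA5 G) {f : G →* H} (hf : Function.Surjective f) : IsPolyCyclicOrA5 H := by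
  induction hG generalizing H with
  | of_subsingleton G =>
    have := hf.subsingleton
    exact .of_subsingleton H
  | @extension G _ N _ _ hQ ih =>
    have : (N.map f).Normal := Subgroup.Normal.map ‹_› f hf
    refine .extension (N.map f) (ih (f.subgroupMap_surjective N)) (hQ.of_surjective
      (f := QuotientGroup.map N (N.map f) f (Subgroup.le_comap_map f N)) fun y => ?_)
    obtain ⟨h, rfl⟩ := QuotientGroup.mk'_surjective _ y
    obtain ⟨g, rfl⟩ := hf h
    exact ⟨(g : G ⧸ N), rfl⟩

theorem IsPseudoSolvable.isPolyCyclicOrA5 {G : Type u} [Group G] (hG : IsPseudoSolvable G) :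
    IsPolyCyclicOrA5 G := by
  obtain ⟨n, H, hbot, htop, hstep⟩ := hG
  have hseries (i : Fin (n + 1)) : IsPolyCyclicOrA5 (H i) := by
    induction i using Fin.induction with
    | zero =>
      have : Subsingleton (H 0) := hbot ▸ inferInstance
      exact .of_subsingleton _
    | succ i ih =>
      obtain ⟨hle, hnormal, hfactor⟩ := hstep i
      let e := (Subgroup.subgroupOfEquivOfLe hle).symm
      exact .extension _ (ih.of_surjective (f := e.toMonoidHom) e.surjective) hfactor
  have hlast := hseries (Fin.last n)
  rw [htop] at hlast
  exact hlast.of_surjective (f := (Subgroup.topEquiv (G := G)).toMonoidHom)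
    Subgroup.topEquiv.surjective

end Towers

section CoprimeActionsOfTowers

variable {K : Type u} {M : Type v} [Group K] [CommGroup M] {T : Finset ℕ}

theorem IsOddCoclique.eq_three_five_of_dvd_sixty (hT : IsOddCoclique K T) (hcard : 1 < T.card)
    (h60 : ∀ t ∈ T, t ∣ 60) : T = {3, 5} := by
  refine Finset.eq_of_subset_of_card_le (fun t ht => ?_) hcard
  simpa using eq_three_or_eq_five_of_dvd_sixty (hT.prime t ht) (hT.ne_two t ht) (h60 t ht)

theorem subset_elementOrders_of_isCyclicOrA5_quotient [Finite K] [MulDistribMulAction K M]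
    [FaithfulSMul K M] (hcop : (Nat.card M).Coprime (Nat.card K)) (hT : IsOddCoclique K T)
    (hcard : 1 < T.card) (hfree : ∀ t ∈ T, OrderActsFreely K M t) (N : Subgroup K) [N.Normal]
    (hN : ∀ t ∈ T, ¬ t ∣ Nat.card N) (hQ : IsCyclicOrA5 (K ⧸ N)) : {6, 10} ⊆ elementOrders K := by
  have hindex (t : ℕ) (ht : t ∈ T) : t ∣ Nat.card (K ⧸ N) :=
    (hT.dvd_card_or_dvd_index N ht).resolve_left (hN t ht)
  have hTQ : IsOddCoclique (K ⧸ N) T := hT.mono subset_rfl hindex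
    (elementOrders_subset_of_surjective (QuotientGroup.mk'_surjective N))
  rcases hQ with hQ | ⟨⟨e⟩⟩
  · exact absurd hTQ.card_le_one_of_isCyclic hcard.not_ge
  · rw [Nat.card_congr e.toEquiv, card_alternatingGroup_five] at hindex
    obtain rfl := hT.eq_three_five_of_dvd_sixty hcard hindex
    have hker : (e.toMonoidHom.comp (QuotientGroup.mk' N)).ker = N := by
      rw [MulEquiv.toMonoidHom_eq_coe, MonoidHom.ker_mulEquiv_comp, QuotientGroup.ker_mk']
    rw [← hker] at hN
    exact subset_elementOrders_of_surjective_alternatingGroup_five hcop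
      (e.surjective.comp (QuotientGroup.mk'_surjective N))
      (hN 3 (by simp)) (hN 5 (by simp)) (hfree 3 (by simp)) (hfree 5 (by simp))

theorem IsPolyCyclicOrA5.subset_elementOrders_of_orderActsFreely (hK : IsPolyCyclicOrA5 K)
    [Finite K] [MulDistribMulAction K M] [FaithfulSMul K M]
    (hcop : (Nat.card M).Coprime (Nat.card K)) (hT : IsOddCoclique K T) (hcard : 1 < T.card)
    (hfree : ∀ t ∈ T, OrderActsFreely K M t) : {6, 10} ⊆ elementOrders K := by
  induction hK generalizing ‹Finite K› ‹MulDistribMulAction K M› with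
  | of_subsingleton K =>
    exact absurd (hT.nontrivial (zero_lt_one.trans hcard)) (not_nontrivial K)
  | @extension K _ N _ _ hQ ih =>
    by_cases hTN : ∀ t ∈ T, t ∣ Nat.card N
    · exact (ih (hcop.coprime_dvd_right N.card_subgroup_dvd_card)
        (hT.mono subset_rfl hTN (elementOrders_subgroup_subset N))
        fun t ht => (hfree t ht).subgroup N).trans (elementOrders_subgroup_subset N)
    push Not at hTN
    obtain ⟨s, hs, hsN⟩ := hTN
    refine subset_elementOrders_of_isCyclicOrA5_quotient hcop hT hcard hfree N
      (fun t ht htN => ?_) hQ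
    exact hT.mul_notMem s hs t ht (fun hst => hsN (hst ▸ htN))
      (mul_mem_elementOrders_of_orderActsFreely hcop (hT.prime s hs) (hT.prime t ht) N hsN
        ((hT.dvd_card_or_dvd_index N hs).resolve_left hsN) htN (hfree s hs))

end CoprimeActionsOfTowers

section CharacteristicSubgroups

/-- The shape of the characteristic subgroups that drive the induction: an `r`-group for some
prime `r`, or a copy of `A₅`. -/
def IsPGroupOrA5 (M : Type*) [Group M] : Prop :=
  (∃ r : ℕ, r.Prime ∧ IsPGroup r M) ∨ Nonempty (M ≃* alternatingGroup (Fin 5))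

theorem IsPGroupOrA5.of_equiv {M N : Type*} [Group M] [Group N] (hM : IsPGroupOrA5 M)
    (e : M ≃* N) : IsPGroupOrA5 N :=
  hM.imp (fun ⟨r, hr, h⟩ => ⟨r, hr, h.of_equiv e⟩) fun ⟨f⟩ => ⟨e.symm.trans f⟩

theorem exists_characteristic_isPGroup {G : Type*} [Group G] {r : ℕ} (L : Subgroup G) [L.Normal]
    (hL : L ≠ ⊥) (hr : IsPGroup r L) :
    ∃ M : Subgroup G, M.Characteristic ∧ M ≠ ⊥ ∧ IsPGroup r M := by
  refine ⟨sSup {H | H.Normal ∧ IsPGroup r H}, Subgroup.characteristic_iff_map_le.2 fun ϕ => ?_,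
    ne_bot_of_le_ne_bot hL (le_sSup ⟨‹_›, hr⟩),
    Sylow.sSup_of_normal _ (fun H hH => hH.2) (fun H hH => hH.1)⟩
  refine Subgroup.map_le_iff_le_comap.2 (sSup_le fun H hH => Subgroup.map_le_iff_le_comap.1 ?_)
  exact le_sSup ⟨hH.1.map _ ϕ.surjective, hH.2.map _⟩

variable {G : Type u} [Group G] [Finite G]

theorem characteristic_of_mulEquiv_alternatingGroup_five (hG : ¬ {6, 10} ⊆ elementOrders G)
    (A : Subgroup G) [A.Normal] (e : A ≃* alternatingGroup (Fin 5)) : A.Characteristic := by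
  have := alternatingGroup.isSimpleGroup (α := Fin 5) (by simp)
  have := e.isSimpleGroup
  have hcard : Nat.card A = 60 := (Nat.card_congr e.toEquiv).trans card_alternatingGroup_five
  refine by_contra fun hA => hG (Set.pair_subset ?_ ?_)
  · exact mul_mem_elementOrders_of_normal_isSimpleGroup A hA Nat.prime_two Nat.prime_three
      (by norm_num) (by norm_num [hcard]) (by norm_num [hcard])
  · exact mul_mem_elementOrders_of_normal_isSimpleGroup A hA Nat.prime_two Nat.prime_five
      (by norm_num) (by norm_num [hcard]) (by norm_num [hcard])

theorem exists_characteristic_isPGroupOrA5_of_normal (hG : ¬ {6, 10} ⊆ elementOrders G)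
    (L : Subgroup G) [L.Normal] (hL : L ≠ ⊥) (h : IsPGroupOrA5 L) :
    ∃ M : Subgroup G, M.Characteristic ∧ M ≠ ⊥ ∧ IsPGroupOrA5 M := by
  rcases h with ⟨r, hr, h⟩ | ⟨⟨e⟩⟩
  · obtain ⟨M, hM, hM1, hMr⟩ := exists_characteristic_isPGroup L hL h
    exact ⟨M, hM, hM1, .inl ⟨r, hr, hMr⟩⟩
  · exact ⟨L, characteristic_of_mulEquiv_alternatingGroup_five hG L e, hL, .inr ⟨e⟩⟩

theorem IsCyclicOrA5.exists_normal_isPGroupOrA5 [Nontrivial G] (hG : IsCyclicOrA5 G) :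
    ∃ L : Subgroup G, L.Normal ∧ L ≠ ⊥ ∧ IsPGroupOrA5 L := by
  rcases hG with hG | ⟨⟨e⟩⟩
  · obtain ⟨q, hq, hqG⟩ := Nat.exists_prime_and_dvd (Finite.one_lt_card (α := G)).ne'
    obtain ⟨x, hx⟩ := mem_elementOrders_of_prime_dvd_card hq hqG
    refine ⟨Subgroup.zpowers x, inferInstance, ?_, .inl ⟨q, hq, ?_⟩⟩
    · rintro h
      exact hq.ne_one (by rw [← hx, Subgroup.zpowers_eq_bot.1 h, orderOf_one])
    · exact IsPGroup.of_card (n := 1) (by rw [Nat.card_zpowers, hx, pow_one])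
  · exact ⟨⊤, inferInstance, top_ne_bot, .inr ⟨Subgroup.topEquiv.trans e⟩⟩

theorem IsPolyCyclicOrA5.exists_characteristic_isPGroupOrA5 (hpoly : IsPolyCyclicOrA5 G)
    [Nontrivial G] (hG : ¬ {6, 10} ⊆ elementOrders G) :
    ∃ M : Subgroup G, M.Characteristic ∧ M ≠ ⊥ ∧ IsPGroupOrA5 M := by
  induction hpoly generalizing ‹Finite G› ‹Nontrivial G› with
  | of_subsingleton G => exact absurd ‹Nontrivial G› (not_nontrivial G)
  | @extension G _ N _ _ hQ ih =>
    rcases subsingleton_or_nontrivial N with hN | hN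
    · obtain rfl := Subgroup.eq_bot_of_subsingleton N
      obtain ⟨L, hL, hL1, hLA⟩ := (hQ.of_surjective (f := QuotientGroup.quotientBot.toMonoidHom)
        QuotientGroup.quotientBot.surjective).exists_normal_isPGroupOrA5 (G := G)
      exact exists_characteristic_isPGroupOrA5_of_normal hG L hL1 hLA
    · obtain ⟨L, hL, hL1, hLA⟩ := ih fun h => hG (h.trans (elementOrders_subgroup_subset N))
      refine exists_characteristic_isPGroupOrA5_of_normal hG (L.map N.subtype) ?_
        (hLA.of_equiv (L.equivMapOfInjective _ N.subtype_injective))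
      rwa [Ne, Subgroup.map_eq_bot_iff_of_injective _ N.subtype_injective]

end CharacteristicSubgroups

section NormalSubgroups

/-- The group of automorphisms of a normal subgroup `Z` of `G` induced by conjugation, i.e. the
copy of `G / C_G(Z)` inside `MulAut Z`. -/
abbrev conjRange {G : Type*} [Group G] (Z : Subgroup G) [Z.Normal] : Subgroup (MulAut Z) :=
  (MulAut.conjNormal : G →* MulAut Z).range

variable {G : Type u} [Group G] [Finite G] {r q : ℕ} {T : Finset ℕ}

theorem mul_mem_elementOrders_of_conjNormal_apply_eq (Z : Subgroup G) [Z.Normal] (hr : r.Prime)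
    (hq : q.Prime) (hrq : r ≠ q) (hZ : IsPGroup r Z) {g : G} (hg : q ∣ orderOf g) {z : Z}
    (hz : z ≠ 1) (hgz : MulAut.conjNormal g z = z) : r * q ∈ elementOrders G := by
  have : Fact r.Prime := ⟨hr⟩
  have hcomm : Commute (z : G) g := by
    rw [commute_iff_eq, eq_comm, ← mul_inv_eq_iff_eq_mul, ← MulAut.conjNormal_apply, hgz]
  refine mul_mem_elementOrders_of_commute hr hq hrq hcomm ?_ hg
  rw [Subgroup.orderOf_coe]
  exact hZ.dvd_orderOf hz

theorem orderActsFreely_conjRange (Z : Subgroup G) [Z.Normal] (hr : r.Prime) (hq : q.Prime)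
    (hrq : r ≠ q) (hZ : IsPGroup r Z) (hno : r * q ∉ elementOrders G) :
    OrderActsFreely (conjRange Z) Z q := by
  rintro ⟨_, g, rfl⟩ hg z hgz
  by_contra hz
  have hg' : orderOf ((MulAut.conjNormal : G →* MulAut Z).rangeRestrict g) = q := hg
  exact hno (mul_mem_elementOrders_of_conjNormal_apply_eq Z hr hq hrq hZ
    (hg' ▸ orderOf_map_dvd _ g) hz hgz)

theorem dvd_card_conjRange (Z : Subgroup G) [Z.Normal] [Nontrivial Z] (hr : r.Prime)
    (hq : q.Prime) (hrq : r ≠ q) (hZ : IsPGroup r Z) (hno : r * q ∉ elementOrders G)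
    (hqG : q ∣ Nat.card G) : q ∣ Nat.card (conjRange Z) := by
  rw [← Subgroup.index_ker]
  rw [← Subgroup.card_mul_index (MulAut.conjNormal : G →* MulAut Z).ker] at hqG
  refine (hq.dvd_mul.1 hqG).resolve_left fun hqker => ?_
  obtain ⟨x, hx⟩ := mem_elementOrders_of_prime_dvd_card hq hqker
  obtain ⟨z, hz⟩ := exists_ne (1 : Z)
  refine hno (mul_mem_elementOrders_of_conjNormal_apply_eq Z hr hq hrq hZ (g := x) ?_ hz ?_)
  · rw [Subgroup.orderOf_coe, hx]
  · rw [MonoidHom.mem_ker.1 x.2, MulAut.one_apply]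

open IsMulCommutative in
theorem subset_elementOrders_of_normal_isMulCommutative (hG : IsPolyCyclicOrA5 G)
    (hT : IsOddCoclique G T) (hcard : 2 < T.card) (hrT : r ∈ T) (Z : Subgroup G) [Z.Normal]
    [IsMulCommutative Z] [Nontrivial Z] (hZ : IsPGroup r Z)
    (hrZ : ¬ r ∣ Nat.card (conjRange Z)) : {6, 10} ⊆ elementOrders G := by
  have hr := hT.prime r hrT
  have : Fact r.Prime := ⟨hr⟩
  have hsurj := (MulAut.conjNormal : G →* MulAut Z).rangeRestrict_surjective
  have hω : elementOrders (conjRange Z) ⊆ elementOrders G :=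
    elementOrders_subset_of_surjective hsurj
  have hno {q : ℕ} (hq : q ∈ T.erase r) : r * q ∉ elementOrders G :=
    hT.mul_notMem r hrT q (Finset.mem_of_mem_erase hq) (Finset.ne_of_mem_erase hq).symm
  have hcop : (Nat.card Z).Coprime (Nat.card (conjRange Z)) := by
    obtain ⟨k, hk⟩ := IsPGroup.iff_card.1 hZ
    exact hk ▸ (hr.coprime_iff_not_dvd.2 hrZ).pow_left k
  have hTr : IsOddCoclique (conjRange Z) (T.erase r) := hT.mono (Finset.erase_subset r T)
    (fun q hq => dvd_card_conjRange Z hr (hT.prime q (Finset.mem_of_mem_erase hq))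
      (Finset.ne_of_mem_erase hq).symm hZ (hno hq) (hT.dvd_card q (Finset.mem_of_mem_erase hq))) hω
  refine ((hG.of_surjective hsurj).subset_elementOrders_of_orderActsFreely hcop hTr ?_
    fun q hq => ?_).trans hω
  · rw [Finset.card_erase_of_mem hrT]
    lia
  · exact orderActsFreely_conjRange Z hr (hTr.prime q hq) (Finset.ne_of_mem_erase hq).symm hZ
      (hno hq)

theorem subset_elementOrders_of_normal_isPGroup (hG : IsPolyCyclicOrA5 G)
    (hT : IsOddCoclique G T) (hcard : 2 < T.card) (hrT : r ∈ T) (M : Subgroup G) [M.Normal]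
    (hM : M ≠ ⊥) (hMr : IsPGroup r M) (hrM : ¬ r ∣ M.index) : {6, 10} ⊆ elementOrders G := by
  have : Fact r.Prime := ⟨hT.prime r hrT⟩
  have : Nontrivial M := (Subgroup.nontrivial_iff_ne_bot _).2 hM
  have hcenter : Nontrivial (Subgroup.center M) := hMr.center_nontrivial
  let Z := (Subgroup.center M).map M.subtype
  have hZM : Z ≤ M := Subgroup.map_subtype_le _
  have : Nontrivial Z :=
    ((Subgroup.center M).equivMapOfInjective _ M.subtype_injective).toEquiv.symm.nontrivial
  have hker : M ≤ (MulAut.conjNormal : G →* MulAut Z).ker := fun m hm => by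
    rw [MonoidHom.mem_ker]
    ext ⟨_, z, hz, rfl⟩
    have hzm : m * (z : G) = z * m := congrArg Subtype.val (Subgroup.mem_center_iff.1 hz ⟨m, hm⟩)
    simp [hzm]
  refine subset_elementOrders_of_normal_isMulCommutative hG hT hcard hrT Z (hMr.to_le hZM)
    fun h => hrM (h.trans ?_)
  rw [← Subgroup.index_ker]
  exact Subgroup.index_dvd_of_le hker

theorem IsOddCoclique.not_dvd_card_of_mulEquiv_alternatingGroup_five (hT : IsOddCoclique G T)
    (hcard : 2 < T.card) (A : Subgroup G) [A.Normal] (e : A ≃* alternatingGroup (Fin 5))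
    (hr : r ∈ T) : ¬ r ∣ Nat.card A := by
  intro hrA
  rw [Nat.card_congr e.toEquiv, card_alternatingGroup_five] at hrA
  obtain ⟨p, hp, hp35⟩ : ∃ p ∈ T, p ∉ ({3, 5} : Finset ℕ) :=
    Finset.exists_mem_notMem_of_card_lt_card hcard
  have hp60 : ¬ p ∣ 60 := fun h => hp35 <| by
    simpa using eq_three_or_eq_five_of_dvd_sixty (hT.prime p hp) (hT.ne_two p hp) h
  have hcardA (q : ℕ) : Nat.card {a : A // orderOf a = q} =
      Nat.card {a : alternatingGroup (Fin 5) // orderOf a = q} :=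
    Nat.card_congr (e.toEquiv.subtypeEquiv fun a => by simp)
  have hpr : r ≠ p := fun h => hp60 (h ▸ hrA)
  refine hT.mul_notMem r hr p hp hpr (mul_mem_elementOrders_of_not_dvd_card A (hT.prime p hp)
    (hT.prime r hr) hpr (hT.dvd_card p hp) ?_)
  rw [hcardA]
  rcases eq_three_or_eq_five_of_dvd_sixty (hT.prime r hr) (hT.ne_two r hr) hrA with rfl | rfl
  · rw [card_orderOf_eq_three_alternatingGroup_five]
    exact fun h => hp60 (h.trans (by norm_num))
  · rw [card_orderOf_eq_five_alternatingGroup_five]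
    exact fun h => hp60 ((hT.prime p hp).dvd_of_dvd_pow (n := 3) (h.trans (by norm_num)))

end NormalSubgroups

theorem IsPolyCyclicOrA5.subset_elementOrders {G : Type u} [Group G] [Finite G]
    (hG : IsPolyCyclicOrA5 G) {T : Finset ℕ} (hT : IsOddCoclique G T) (hcard : 2 < T.card) :
    {6, 10} ⊆ elementOrders G := by
  induction hn : Nat.card G using Nat.strong_induction_on generalizing G with
  | _ n ih =>
    by_contra hω
    have : Nontrivial G := hT.nontrivial (pos_of_gt hcard)
    obtain ⟨M, hMchar, hM, hMA⟩ := hG.exists_characteristic_isPGroupOrA5 hω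
    have hTM : ∃ r ∈ T, ¬ r ∣ M.index := by
      by_contra! hTM
      have hquot : elementOrders (G ⧸ M) ⊆ elementOrders G :=
        elementOrders_subset_of_surjective (QuotientGroup.mk'_surjective M)
      refine hω ((ih _ ?_ (hG.of_surjective (QuotientGroup.mk'_surjective M))
        (hT.mono subset_rfl hTM hquot) rfl).trans hquot)
      rw [← hn, Subgroup.card_eq_card_quotient_mul_card_subgroup M]
      exact lt_mul_of_one_lt_right Nat.card_pos (M.one_lt_card_iff_ne_bot.2 hM)
    obtain ⟨r, hrT, hrM⟩ := hTM
    have hrM' : r ∣ Nat.card M := (hT.dvd_card_or_dvd_index M hrT).resolve_right hrM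
    rcases hMA with ⟨q, hq, hMq⟩ | ⟨⟨e⟩⟩
    · have : Fact q.Prime := ⟨hq⟩
      obtain ⟨k, hk⟩ := IsPGroup.iff_card.1 hMq
      obtain rfl : r = q := (Nat.prime_dvd_prime_iff_eq (hT.prime r hrT) hq).1
        ((hT.prime r hrT).dvd_of_dvd_pow (hk ▸ hrM'))
      exact hω (subset_elementOrders_of_normal_isPGroup hG hT hcard hrT M hM hMq hrM)
    · exact hT.not_dvd_card_of_mulEquiv_alternatingGroup_five hcard M e hrT hrM'

theorem has_order_six_and_ten_of_p35_triangle_general (G : Type*) [Group G] [Finite G]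
    (hG : IsPseudoSolvable G) {T : Finset ℕ} (hT : IsOddCoclique G T) (hcard : 2 < T.card) :
    {6, 10} ⊆ elementOrders G :=
  hG.isPolyCyclicOrA5.subset_elementOrders hT hcard

/-- If `{p,3,5}` is a triangle in the prime-graph complement of a pseudo-solvable group
for some prime `p ≠ 2`, then neither `2 - 3` nor `2 - 5` is an edge of the complement:
`G` has elements of order `6` and of order `10`. -/
theorem has_order_six_and_ten_of_p35_triangle
    (G : Type*) [Group G] [Finite G] (hG : IsPseudoSolvable G)
    (p : ℕ) (hp : p.Prime) (hp' : p ∉ ({2, 3, 5} : Set ℕ))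
    (hpd : p ∣ Nat.card G) (h3d : 3 ∣ Nat.card G) (h5d : 5 ∣ Nat.card G)
    (h3p : ¬ ∃ g : G, orderOf g = 3 * p)
    (h5p : ¬ ∃ g : G, orderOf g = 5 * p)
    (h15 : ¬ ∃ g : G, orderOf g = 15) :
    (∃ g : G, orderOf g = 6) ∧ (∃ g : G, orderOf g = 10) := by
  simp only [Set.mem_insert_iff, Set.mem_singleton_iff, not_or] at hp'
  obtain ⟨hp2, hp3, hp5⟩ := hp'
  have h610 := has_order_six_and_ten_of_p35_triangle_general G hG
    (IsOddCoclique.insert_three_five hp hp2 hpd h3d h5d h3p h5p h15) (by simp [hp3, hp5])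
  exact ⟨h610 (.inl rfl), h610 (.inr rfl)⟩
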